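/- There exists ν₂₀ ∈ (0,1) such that for every ν₂ ∈ (0, ν₂₀] there exists ν₁₀ ∈ (0, ν₂] such that for every ν₁ ∈ (0, ν₁₀] there exists ε₀ > 0 such that for every ε ∈ (0, ε₀] there exists n₀ ∈ ℕ such that for every n ≥ n₀ the following holds: if G = (A ∪ B, E) is an ε-extremal Dirac bipartite graph on 2n vertices, then G is a (ν₁,ν₂)-superextremal graph. -/

import Mathlib

/-- `e(v, X)`: the number of neighbours of `v` in `X`. -/
noncomputable def degOn {V : Type*} (G : SimpleGraph V) (v : V) (X : Set V) : ℕ :=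
  (G.neighborSet v ∩ X).ncard

/-- `ε`-extremal balanced bipartite graph with parts `A`, `B` of size `n`. -/
def EpsExtremal {V : Type*} (G : SimpleGraph V) (A B : Set V) (n : ℕ) (ε : ℝ) : Prop :=
  ∃ A₁ A₂ B₁ B₂ : Set V,
    A₁ ∪ A₂ = A ∧ Disjoint A₁ A₂ ∧ B₁ ∪ B₂ = B ∧ Disjoint B₁ B₂ ∧
    |(A₁.ncard : ℝ) - (A₂.ncard : ℝ)| ≤ ε * n ∧
    |(B₁.ncard : ℝ) - (B₂.ncard : ℝ)| ≤ ε * n ∧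
    (({p : V × V | p.1 ∈ A₁ ∧ p.2 ∈ B₂ ∧ G.Adj p.1 p.2}).ncard : ℝ) ≤ ε * n ^ 2

/-- `(ν₁,ν₂)`-superextremal balanced bipartite graph with parts `A`, `B` of size `n`:
there are partitions `A = A₁ ∪ A₂`, `B = B₁ ∪ B₂` satisfying (Q1)–(Q9). -/
def SuperExtremal {V : Type*} (G : SimpleGraph V) (A B : Set V) (n : ℕ)
    (ν₁ ν₂ : ℝ) : Prop :=
  ∃ A₁ A₂ B₁ B₂ : Set V,
    A₁ ∪ A₂ = A ∧ Disjoint A₁ A₂ ∧ B₁ ∪ B₂ = B ∧ Disjoint B₁ B₂ ∧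
    -- (Q1)
    ((({v ∈ A₁ | ((degOn G v B₁ : ℝ) < (n : ℝ) / 2 - ν₁ * n)}).ncard : ℝ) ≤ ν₁ * n) ∧
    ((({v ∈ A₂ | ((degOn G v B₂ : ℝ) < (n : ℝ) / 2 - ν₁ * n)}).ncard : ℝ) ≤ ν₁ * n) ∧
    -- (Q2)
    (∀ v ∈ A₁, ν₂ * n ≤ (degOn G v B₁ : ℝ)) ∧ (∀ v ∈ A₂, ν₂ * n ≤ (degOn G v B₂ : ℝ)) ∧
    -- (Q3)
    ((({v ∈ B₁ | ((degOn G v A₁ : ℝ) < (n : ℝ) / 2 - ν₁ * n)}).ncard : ℝ) ≤ ν₁ * n) ∧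
    ((({v ∈ B₂ | ((degOn G v A₂ : ℝ) < (n : ℝ) / 2 - ν₁ * n)}).ncard : ℝ) ≤ ν₁ * n) ∧
    -- (Q4)
    (∀ v ∈ B₁, ν₂ * n ≤ (degOn G v A₁ : ℝ)) ∧ (∀ v ∈ B₂, ν₂ * n ≤ (degOn G v A₂ : ℝ)) ∧
    -- (Q5)
    |(A₁.ncard : ℝ) - (B₁.ncard : ℝ)| ≤ ν₁ * n ∧
    |(A₁.ncard : ℝ) - (A₂.ncard : ℝ)| ≤ ν₁ * n ∧
    -- (Q6)
    (A₁.ncard = B₁.ncard ∨ ∀ v ∈ A₁, (degOn G v B₂ : ℝ) ≤ ν₂ * n) ∧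
    -- (Q7)
    (A₁.ncard = B₁.ncard ∨ ∀ v ∈ B₂, (degOn G v A₁ : ℝ) ≤ ν₂ * n) ∧
    -- (Q8)
    B₁.ncard ≤ A₁.ncard ∧
    -- (Q9)
    ((∀ v ∈ A₁, ((A₁.ncard - B₁.ncard : ℕ) : ℝ) / 2 ≤ (degOn G v B₂ : ℝ)) ∨
     (∀ v ∈ B₂, ((A₁.ncard - B₁.ncard : ℕ) : ℝ) / 2 ≤ (degOn G v A₁ : ℝ)))


section helpers
variable {V : Type} [Fintype V] (G : SimpleGraph V)

lemma degOn_mono' (v : V) {X Y : Set V} (h : X ⊆ Y) : (degOn G v X : ℝ) ≤ degOn G v Y := by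
  unfold degOn
  exact_mod_cast Set.ncard_le_ncard (Set.inter_subset_inter_right _ h) (Set.toFinite _)

lemma degOn_le_diff (v : V) (X Y : Set V) :
    (degOn G v X : ℝ) ≤ degOn G v Y + ((X \ Y).ncard : ℝ) := by
  unfold degOn
  have h1 : G.neighborSet v ∩ X ⊆ (G.neighborSet v ∩ Y) ∪ (X \ Y) := by
    intro u hu
    by_cases h : u ∈ Y
    · exact Or.inl ⟨hu.1, h⟩
    · exact Or.inr ⟨hu.2, h⟩
  have h2 := Set.ncard_le_ncard h1 (Set.toFinite _)
  have h3 := Set.ncard_union_le (G.neighborSet v ∩ Y) (X \ Y)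
  exact_mod_cast h2.trans h3

lemma degOn_le_card (v : V) (X : Set V) : (degOn G v X : ℝ) ≤ X.ncard := by
  unfold degOn
  exact_mod_cast Set.ncard_le_ncard Set.inter_subset_right (Set.toFinite _)

lemma degOn_split (v : V) {X Y : Set V} (hd : Disjoint X Y) (hN : G.neighborSet v ⊆ X ∪ Y) :
    (degOn G v X : ℝ) + degOn G v Y = ((G.neighborSet v).ncard : ℝ) := by
  unfold degOn
  have h : G.neighborSet v = (G.neighborSet v ∩ X) ∪ (G.neighborSet v ∩ Y) := by
    rw [← Set.inter_union_distrib_left]; exact (Set.inter_eq_left.mpr hN).symm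
  have hd' : Disjoint (G.neighborSet v ∩ X) (G.neighborSet v ∩ Y) :=
    hd.mono Set.inter_subset_right Set.inter_subset_right
  have := Set.ncard_union_eq hd' (Set.toFinite _) (Set.toFinite _)
  rw [← h] at this
  exact_mod_cast this.symm

open Classical in
lemma degOn_sum (v : V) (X : Set V) :
    degOn G v X = ∑ u ∈ X.toFinset, if G.Adj v u then 1 else 0 := by
  unfold degOn
  rw [Set.ncard_eq_toFinset_card', Finset.sum_boole]
  simp only [Nat.cast_id]
  congr 1
  ext u
  simp [and_comm]

open Classical in
lemma degOn_sum_comm (X Y : Set V) :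
    ∑ v ∈ X.toFinset, (degOn G v Y : ℝ) = ∑ u ∈ Y.toFinset, (degOn G u X : ℝ) := by
  simp only [degOn_sum]
  push_cast
  rw [Finset.sum_comm]
  simp only [G.adj_comm]

open Classical in
lemma edges_eq_sum (X Y : Set V) :
    (({p : V × V | p.1 ∈ X ∧ p.2 ∈ Y ∧ G.Adj p.1 p.2}).ncard : ℝ)
      = ∑ v ∈ X.toFinset, (degOn G v Y : ℝ) := by
  simp only [degOn_sum]
  rw [Set.ncard_eq_toFinset_card']
  have : ({p : V × V | p.1 ∈ X ∧ p.2 ∈ Y ∧ G.Adj p.1 p.2}).toFinset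
      = (X.toFinset ×ˢ Y.toFinset).filter (fun p => G.Adj p.1 p.2) := by
    ext p; simp [and_assoc]
  rw [this, Finset.card_filter, Finset.sum_product]
  push_cast
  rfl

lemma exists_fix (p q : Set V → V → Prop)
    (hp : ∀ Y Y' v, Y ⊆ Y' → p Y' v → p Y v) (hq : ∀ Y Y' v, Y ⊆ Y' → q Y' v → q Y v) :
    ∃ X Y : Set V, (∀ v, v ∈ X ↔ p Y v) ∧ (∀ v, v ∈ Y ↔ q X v) := by
  let f : Set V →o Set V :=
    { toFun := fun X => {v | p {u | q X u} v}
      monotone' := by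
        intro X X' h v hv
        exact hp _ _ v (fun u hu => hq _ _ u h hu) hv }
  have h : f f.lfp = f.lfp := f.map_lfp
  refine ⟨f.lfp, {u | q f.lfp u}, fun v => ?_, fun v => Iff.rfl⟩
  conv_lhs => rw [← h]
  rfl

open Classical in
lemma atypical (A B X₁ X₂ Y₂ : Set V) (n : ℕ) (hn : 1 ≤ n) (ε δ η : ℝ) (hε : 0 < ε)
    (hεδ : ε ≤ δ) (hη : 4 * ε ≤ δ * η)
    (hX : X₁ ∪ X₂ = A) (hXd : Disjoint X₁ X₂)
    (hNB : ∀ v ∈ B, G.neighborSet v ⊆ A) (hYB : Y₂ ⊆ B)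
    (hdeg : ∀ v : V, (n : ℝ) / 2 ≤ ((G.neighborSet v).ncard : ℝ))
    (hX2 : (X₂.ncard : ℝ) ≤ n / 2 + ε * n / 2) (hY2 : (n : ℝ) / 2 - ε * n / 2 ≤ (Y₂.ncard : ℝ))
    (hY2n : (Y₂.ncard : ℝ) ≤ n)
    (he : ∑ v ∈ X₁.toFinset, (degOn G v Y₂ : ℝ) ≤ ε * n ^ 2) :
    ∃ T : Set V, T ⊆ A ∧ (T.ncard : ℝ) ≤ η * n ∧ (∀ v ∈ X₁ \ T, (degOn G v Y₂ : ℝ) ≤ δ * n) ∧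
      (∀ v ∈ X₂ \ T, (n : ℝ) / 2 - δ * n ≤ degOn G v Y₂) := by
  have hn' : (1 : ℝ) ≤ n := by exact_mod_cast hn
  have hδ : 0 < δ := by linarith
  set T₁ : Set V := {v ∈ X₁ | δ * n < (degOn G v Y₂ : ℝ)} with hT₁
  set T₂ : Set V := {v ∈ X₂ | (degOn G v Y₂ : ℝ) < n / 2 - δ * n} with hT₂
  have h1 : (T₁.ncard : ℝ) * (δ * n) ≤ ε * n ^ 2 := by
    refine le_trans ?_ he
    calc (T₁.ncard : ℝ) * (δ * n) = ∑ v ∈ T₁.toFinset, (δ * n) := by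
          rw [Finset.sum_const, Set.ncard_eq_toFinset_card', nsmul_eq_mul]
      _ ≤ ∑ v ∈ T₁.toFinset, (degOn G v Y₂ : ℝ) := by
          apply Finset.sum_le_sum
          intro v hv
          rw [Set.mem_toFinset] at hv
          exact hv.2.le
      _ ≤ _ := by
          apply Finset.sum_le_sum_of_subset_of_nonneg
          · intro v hv
            rw [Set.mem_toFinset] at hv ⊢
            exact hv.1
          · intros; positivity
  have h2 : (Y₂.ncard : ℝ) * (n / 2) - ε * n ^ 2 ≤ ∑ v ∈ X₂.toFinset, (degOn G v Y₂ : ℝ) := by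
    rw [degOn_sum_comm]
    rw [degOn_sum_comm] at he
    have : (Y₂.ncard : ℝ) * (n / 2) ≤
        ∑ u ∈ Y₂.toFinset, ((degOn G u X₁ : ℝ) + degOn G u X₂) := by
      rw [Set.ncard_eq_toFinset_card', ← nsmul_eq_mul, ← Finset.sum_const]
      apply Finset.sum_le_sum
      intro u hu
      rw [Set.mem_toFinset] at hu
      rw [degOn_split G u hXd (by rw [hX]; exact hNB u (hYB hu))]
      exact hdeg u
    rw [Finset.sum_add_distrib] at this
    linarith
  have h3 : (T₂.ncard : ℝ) * (Y₂.ncard - (n / 2 - δ * n)) ≤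
      ∑ v ∈ X₂.toFinset, ((Y₂.ncard : ℝ) - degOn G v Y₂) := by
    calc (T₂.ncard : ℝ) * (Y₂.ncard - (n / 2 - δ * n))
        = ∑ v ∈ T₂.toFinset, ((Y₂.ncard : ℝ) - (n / 2 - δ * n)) := by
          rw [Finset.sum_const, Set.ncard_eq_toFinset_card' T₂, nsmul_eq_mul]
      _ ≤ ∑ v ∈ T₂.toFinset, ((Y₂.ncard : ℝ) - degOn G v Y₂) := by
          apply Finset.sum_le_sum
          intro v hv
          rw [Set.mem_toFinset] at hv
          linarith [hv.2]
      _ ≤ _ := by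
          apply Finset.sum_le_sum_of_subset_of_nonneg
          · intro v hv
            rw [Set.mem_toFinset] at hv ⊢
            exact hv.1
          · intro v _ _
            linarith [degOn_le_card G v Y₂]
  rw [Finset.sum_sub_distrib, Finset.sum_const, nsmul_eq_mul,
    ← Set.ncard_eq_toFinset_card' X₂] at h3
  have h4 : (T₂.ncard : ℝ) * (δ * n / 2) ≤ 3 / 2 * ε * n ^ 2 := by
    have a1 : (T₂.ncard : ℝ) * (δ * n / 2) ≤ (T₂.ncard : ℝ) * (Y₂.ncard - (n / 2 - δ * n)) := by
      apply mul_le_mul_of_nonneg_left _ (by positivity)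
      nlinarith
    have a2 : (X₂.ncard : ℝ) * Y₂.ncard ≤ (n / 2 + ε * n / 2) * Y₂.ncard :=
      mul_le_mul_of_nonneg_right hX2 (by positivity)
    have a3 : (ε * n / 2) * (Y₂.ncard : ℝ) ≤ (ε * n / 2) * n :=
      mul_le_mul_of_nonneg_left hY2n (by positivity)
    nlinarith
  have hc : ((T₁ ∪ T₂).ncard : ℝ) ≤ T₁.ncard + T₂.ncard := by
    exact_mod_cast Set.ncard_union_le _ _
  refine ⟨T₁ ∪ T₂, ?_, ?_, ?_, ?_⟩
  · rw [← hX]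
    exact Set.union_subset_union (fun v hv => hv.1) (fun v hv => hv.1)
  · have : ((T₁.ncard : ℝ) + T₂.ncard) * (δ * n) ≤ (η * n) * (δ * n) := by
      have : (4 * ε) * (n : ℝ) ^ 2 ≤ (δ * η) * n ^ 2 :=
        mul_le_mul_of_nonneg_right hη (by positivity)
      nlinarith
    have := le_of_mul_le_mul_right this (by positivity)
    linarith
  · intro v hv
    by_contra hcon
    exact hv.2 (Or.inl ⟨hv.1, not_le.mp hcon⟩)
  · intro v hv
    by_contra hcon
    exact hv.2 (Or.inr ⟨hv.1, not_le.mp hcon⟩)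

lemma finish (A B A₁ A₂ B₁ B₂ T S C₁ C₂ D₁ D₂ : Set V) (n : ℕ) (ν₁ ν₂ : ℝ) (hν₁ : 0 < ν₁)
    (hA : A₁ ∪ A₂ = A) (hB : B₁ ∪ B₂ = B)
    (hNA : ∀ v ∈ A, G.neighborSet v ⊆ B) (hNB : ∀ v ∈ B, G.neighborSet v ⊆ A)
    (hAn : A.ncard = n) (hBn : B.ncard = n)
    (hdeg : ∀ v : V, (n : ℝ) / 2 ≤ ((G.neighborSet v).ncard : ℝ))
    (sA₁ : (A₁.ncard : ℝ) ≤ n / 2 + ν₁ / 16 * n) (sA₂ : (A₂.ncard : ℝ) ≤ n / 2 + ν₁ / 16 * n)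
    (sB₁ : (B₁.ncard : ℝ) ≤ n / 2 + ν₁ / 16 * n) (sB₂ : (B₂.ncard : ℝ) ≤ n / 2 + ν₁ / 16 * n)
    (hT : (T.ncard : ℝ) ≤ ν₁ / 16 * n) (hS : (S.ncard : ℝ) ≤ ν₁ / 16 * n)
    (tA₁ : ∀ v ∈ A₁ \ T, (n : ℝ) / 2 - ν₁ / 4 * n ≤ degOn G v B₁)
    (tA₂ : ∀ v ∈ A₂ \ T, (n : ℝ) / 2 - ν₁ / 4 * n ≤ degOn G v B₂)
    (tB₁ : ∀ v ∈ B₁ \ S, (n : ℝ) / 2 - ν₁ / 4 * n ≤ degOn G v A₁)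
    (tB₂ : ∀ v ∈ B₂ \ S, (n : ℝ) / 2 - ν₁ / 4 * n ≤ degOn G v A₂)
    (hC : C₁ ∪ C₂ = A) (hCd : Disjoint C₁ C₂) (hD : D₁ ∪ D₂ = B) (hDd : Disjoint D₁ D₂)
    (dC₁ : ((C₁ \ A₁).ncard : ℝ) ≤ ν₁ / 4 * n) (dC₂ : ((C₂ \ A₂).ncard : ℝ) ≤ ν₁ / 4 * n)
    (dD₁ : ((D₁ \ B₁).ncard : ℝ) ≤ ν₁ / 4 * n) (dD₂ : ((D₂ \ B₂).ncard : ℝ) ≤ ν₁ / 4 * n)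
    (hAd : Disjoint A₁ A₂) (hBd : Disjoint B₁ B₂)
    (q2₁ : ∀ v ∈ C₁, ν₂ * n ≤ (degOn G v D₁ : ℝ)) (q2₂ : ∀ v ∈ C₂, ν₂ * n ≤ (degOn G v D₂ : ℝ))
    (q4₁ : ∀ v ∈ D₁, ν₂ * n ≤ (degOn G v C₁ : ℝ)) (q4₂ : ∀ v ∈ D₂, ν₂ * n ≤ (degOn G v C₂ : ℝ))
    (q6 : C₁.ncard = D₁.ncard ∨ ∀ v ∈ C₁, (degOn G v D₂ : ℝ) ≤ ν₂ * n)
    (q7 : C₁.ncard = D₁.ncard ∨ ∀ v ∈ D₂, (degOn G v C₁ : ℝ) ≤ ν₂ * n)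
    (q8 : D₁.ncard ≤ C₁.ncard) : SuperExtremal G A B n ν₁ ν₂ := by
  have hν : 0 ≤ ν₁ * n := by positivity
  have cnt : ∀ (X X' Y Y' T' : Set V), (T'.ncard : ℝ) ≤ ν₁ / 16 * n →
      ((X' \ X).ncard : ℝ) ≤ ν₁ / 4 * n → ((Y \ Y').ncard : ℝ) ≤ ν₁ / 4 * n →
      (∀ v ∈ X \ T', (n : ℝ) / 2 - ν₁ / 4 * n ≤ degOn G v Y) →
      ((({v ∈ X' | ((degOn G v Y' : ℝ) < (n : ℝ) / 2 - ν₁ * n)}).ncard : ℝ) ≤ ν₁ * n) := by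
    intro X X' Y Y' T' h1 h2 h3 h4
    have hs : {v ∈ X' | ((degOn G v Y' : ℝ) < (n : ℝ) / 2 - ν₁ * n)} ⊆ T' ∪ (X' \ X) := by
      rintro v ⟨hv1, hv2⟩
      by_cases hvX : v ∈ X
      · by_cases hvT : v ∈ T'
        · exact Or.inl hvT
        · exfalso
          have a := h4 v ⟨hvX, hvT⟩
          have b := degOn_le_diff G v Y Y'
          linarith
      · exact Or.inr ⟨hv1, hvX⟩
    have a : (({v ∈ X' | ((degOn G v Y' : ℝ) < (n : ℝ) / 2 - ν₁ * n)}).ncard : ℝ)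
        ≤ T'.ncard + (X' \ X).ncard := by
      exact_mod_cast (Set.ncard_le_ncard hs (Set.toFinite _)).trans (Set.ncard_union_le _ _)
    linarith
  have flip : ∀ (X X₁ X₂ Y₁ Y₂ : Set V), X₁ ∪ X₂ = X → Y₁ ∪ Y₂ = X → Disjoint X₁ X₂ →
      X₁ \ Y₁ ⊆ Y₂ \ X₂ := by
    intro X X₁ X₂ Y₁ Y₂ h1 h2 h3 v hv
    have hx : v ∈ Y₁ ∪ Y₂ := by rw [h2, ← h1]; exact Or.inl hv.1
    refine ⟨hx.resolve_left hv.2, fun h => Set.disjoint_left.mp h3 hv.1 h⟩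
  have flipc : ∀ (X X₁ X₂ Y₁ Y₂ : Set V), X₁ ∪ X₂ = X → Y₁ ∪ Y₂ = X → Disjoint X₁ X₂ →
      ((Y₂ \ X₂).ncard : ℝ) ≤ ν₁ / 4 * n → ((X₁ \ Y₁).ncard : ℝ) ≤ ν₁ / 4 * n := by
    intro X X₁ X₂ Y₁ Y₂ h1 h2 h3 h4
    refine le_trans ?_ h4
    exact_mod_cast Set.ncard_le_ncard (flip X X₁ X₂ Y₁ Y₂ h1 h2 h3) (Set.toFinite _)
  have hA' : A₂ ∪ A₁ = A := by rw [Set.union_comm, hA]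
  have hB' : B₂ ∪ B₁ = B := by rw [Set.union_comm, hB]
  have hC' : C₂ ∪ C₁ = A := by rw [Set.union_comm, hC]
  have hD' : D₂ ∪ D₁ = B := by rw [Set.union_comm, hD]
  have sz : ∀ (X Y : Set V), ((X \ Y).ncard : ℝ) ≤ ν₁ / 4 * n →
      (Y.ncard : ℝ) ≤ n / 2 + ν₁ / 16 * n → (X.ncard : ℝ) ≤ n / 2 + 5 / 16 * ν₁ * n := by
    intro X Y h1 h2
    have : (X.ncard : ℝ) ≤ (X \ Y).ncard + Y.ncard := by
      exact_mod_cast Set.ncard_le_ncard_sdiff_add_ncard X Y (Set.toFinite _)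
    linarith
  have z1 := sz _ _ dC₁ sA₁
  have z2 := sz _ _ dC₂ sA₂
  have z3 := sz _ _ dD₁ sB₁
  have z4 := sz _ _ dD₂ sB₂
  have w1 : (C₁.ncard : ℝ) + C₂.ncard = n := by
    have := Set.ncard_union_eq hCd (Set.toFinite _) (Set.toFinite _)
    rw [hC, hAn] at this
    exact_mod_cast this.symm
  have w2 : (D₁.ncard : ℝ) + D₂.ncard = n := by
    have := Set.ncard_union_eq hDd (Set.toFinite _) (Set.toFinite _)
    rw [hD, hBn] at this
    exact_mod_cast this.symm
  refine ⟨C₁, C₂, D₁, D₂, hC, hCd, hD, hDd,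
    cnt A₁ C₁ B₁ D₁ T hT dC₁ (flipc B _ _ _ _ hB hD hBd dD₂) tA₁,
    cnt A₂ C₂ B₂ D₂ T hT dC₂ (flipc B _ _ _ _ hB' hD' hBd.symm dD₁) tA₂, q2₁, q2₂,
    cnt B₁ D₁ A₁ C₁ S hS dD₁ (flipc A _ _ _ _ hA hC hAd dC₂) tB₁,
    cnt B₂ D₂ A₂ C₂ S hS dD₂ (flipc A _ _ _ _ hA' hC' hAd.symm dC₁) tB₂, q4₁, q4₂,
    ?_, ?_, q6, q7, q8, ?_⟩
  · rw [abs_le]; constructor <;> linarith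
  · rw [abs_le]; constructor <;> linarith
  · rw [Nat.cast_sub q8]
    by_cases hc : ((C₁.ncard : ℝ) - D₁.ncard) / 2 ≤ n / 2 - D₁.ncard
    · left
      intro v hv
      have hvA : v ∈ A := by rw [← hC]; exact Or.inl hv
      have a := degOn_split G v hDd (by rw [hD]; exact hNA v hvA)
      have b := hdeg v
      have c := degOn_le_card G v D₁
      linarith
    · right
      intro v hv
      have hvB : v ∈ B := by rw [← hD]; exact Or.inr hv
      have a := degOn_split G v hCd (by rw [hC]; exact hNB v hvB)
      have b := hdeg v
      have c := degOn_le_card G v C₂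
      push Not at hc
      linarith

open Classical in
lemma main_aux (A B : Set V) (n : ℕ) (hn : 1 ≤ n) (ε ν₁ ν₂ : ℝ) (hν₂ : 0 < ν₂)
    (hν₂' : ν₂ ≤ 1 / 10) (hν₁ : 0 < ν₁) (hν₁₂ : ν₁ ≤ ν₂) (hε : 0 < ε) (hε' : ε ≤ ν₁ ^ 2 / 320)
    (hAB : Disjoint A B) (hAn : A.ncard = n) (hBn : B.ncard = n)
    (hadj : ∀ u v : V, G.Adj u v → (u ∈ A ∧ v ∈ B) ∨ (u ∈ B ∧ v ∈ A))
    (hdeg : ∀ v : V, (n : ℝ) / 2 ≤ ((G.neighborSet v).ncard : ℝ))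
    (hext : EpsExtremal G A B n ε) : SuperExtremal G A B n ν₁ ν₂ := by
  obtain ⟨A₁, A₂, B₁, B₂, hA, hAd, hB, hBd, hAs, hBs, he⟩ := hext
  have hn' : (1 : ℝ) ≤ n := by exact_mod_cast hn
  have hNA : ∀ v ∈ A, G.neighborSet v ⊆ B := by
    intro v hv u hu
    rcases hadj v u hu with h | h
    · exact h.2
    · exact absurd h.1 (Set.disjoint_left.mp hAB hv)
  have hNB : ∀ v ∈ B, G.neighborSet v ⊆ A := by
    intro v hv u hu
    rcases hadj v u hu with h | h
    · exact absurd hv (Set.disjoint_left.mp hAB h.1)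
    · exact h.2
  have wA : (A₁.ncard : ℝ) + A₂.ncard = n := by
    have := Set.ncard_union_eq hAd (Set.toFinite _) (Set.toFinite _)
    rw [hA, hAn] at this
    exact_mod_cast this.symm
  have wB : (B₁.ncard : ℝ) + B₂.ncard = n := by
    have := Set.ncard_union_eq hBd (Set.toFinite _) (Set.toFinite _)
    rw [hB, hBn] at this
    exact_mod_cast this.symm
  rw [abs_le] at hAs hBs
  have hεν : ε ≤ ν₁ / 16 := by nlinarith
  have hενn : ε * n ≤ ν₁ / 16 * n := mul_le_mul_of_nonneg_right hεν (by positivity)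
  have hν₁n : 0 < ν₁ * n := by positivity
  have hν₁₂n : ν₁ * n ≤ ν₂ * n := mul_le_mul_of_nonneg_right hν₁₂ (by positivity)
  have hν₂n : ν₂ * n ≤ 1 / 10 * n := mul_le_mul_of_nonneg_right hν₂' (by positivity)
  rw [edges_eq_sum] at he
  have he' := he
  rw [degOn_sum_comm] at he'
  have hB₂B : B₂ ⊆ B := by rw [← hB]; exact Set.subset_union_right
  have hB₁B : B₁ ⊆ B := by rw [← hB]; exact Set.subset_union_left
  have hA₁A : A₁ ⊆ A := by rw [← hA]; exact Set.subset_union_left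
  have hA₂A : A₂ ⊆ A := by rw [← hA]; exact Set.subset_union_right
  have pA₁ : (0 : ℝ) ≤ A₁.ncard := by positivity
  have pA₂ : (0 : ℝ) ≤ A₂.ncard := by positivity
  have pB₁ : (0 : ℝ) ≤ B₁.ncard := by positivity
  have pB₂ : (0 : ℝ) ≤ B₂.ncard := by positivity
  obtain ⟨T, hTA, hT, t1, t2⟩ := atypical G A B A₁ A₂ B₂ n hn ε (ν₁ / 4) (ν₁ / 16) hε
    (by linarith) (by nlinarith) hA hAd hNB hB₂B hdeg (by linarith) (by linarith)
    (by linarith) he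
  obtain ⟨S, hSB, hS, s1, s2⟩ := atypical G B A B₂ B₁ A₁ n hn ε (ν₁ / 4) (ν₁ / 16) hε
    (by linarith) (by nlinarith) (by rw [Set.union_comm, hB]) hBd.symm hNA hA₁A hdeg
    (by linarith) (by linarith) (by linarith) he'
  have fin := fun C₁ C₂ D₁ D₂ => finish G A B A₁ A₂ B₁ B₂ T S C₁ C₂ D₁ D₂ n ν₁ ν₂ hν₁ hA hB
    hNA hNB hAn hBn hdeg (by linarith) (by linarith) (by linarith) (by linarith) hT hS
    (by
      intro v hv
      have a := t1 v hv
      have b := degOn_split G v hBd (by rw [hB]; exact hNA v (hA₁A hv.1))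
      linarith [hdeg v]) t2 s2
    (by
      intro v hv
      have a := s1 v hv
      have b := degOn_split G v hAd (by rw [hA]; exact hNB v (hB₂B hv.1))
      linarith [hdeg v])
  have fin' := fun C₁ C₂ D₁ D₂ => finish G A B A₂ A₁ B₂ B₁ T S C₁ C₂ D₁ D₂ n ν₁ ν₂ hν₁
    (by rw [Set.union_comm, hA]) (by rw [Set.union_comm, hB])
    hNA hNB hAn hBn hdeg (by linarith) (by linarith) (by linarith) (by linarith) hT hS
    t2 (by
      intro v hv
      have a := t1 v hv
      have b := degOn_split G v hBd (by rw [hB]; exact hNA v (hA₁A hv.1))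
      linarith [hdeg v])
    (by
      intro v hv
      have a := s1 v hv
      have b := degOn_split G v hAd (by rw [hA]; exact hNB v (hB₂B hv.1))
      linarith [hdeg v]) s2
  obtain ⟨X, Y, hX, hY⟩ := exists_fix
    (fun Y v => (v ∈ A₁ ∧ v ∉ T) ∨ (v ∈ T ∧ (degOn G v Y : ℝ) ≤ ν₂ * n))
    (fun X v => (v ∈ B₂ ∧ v ∉ S) ∨ (v ∈ S ∧ (degOn G v X : ℝ) ≤ ν₂ * n))
    (by
      rintro Y Y' v h (h1 | h1)
      · exact Or.inl h1
      · exact Or.inr ⟨h1.1, (degOn_mono' G v h).trans h1.2⟩)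
    (by
      rintro Y Y' v h (h1 | h1)
      · exact Or.inl h1
      · exact Or.inr ⟨h1.1, (degOn_mono' G v h).trans h1.2⟩)
  have hXA : X ⊆ A := by
    intro v hv
    rcases (hX v).1 hv with h | h
    · exact hA₁A h.1
    · exact hTA h.1
  have hYB : Y ⊆ B := by
    intro v hv
    rcases (hY v).1 hv with h | h
    · exact hB₂B h.1
    · exact hSB h.1
  have mono : ∀ P Q : Set V, P ⊆ Q → (P.ncard : ℝ) ≤ Q.ncard := by
    intro P Q h
    exact_mod_cast Set.ncard_le_ncard h (Set.toFinite _)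
  have dX₁ : X \ A₁ ⊆ T := by
    intro v hv
    rcases (hX v).1 hv.1 with h | h
    · exact absurd h.1 hv.2
    · exact h.1
  have dX₁' : A₁ \ X ⊆ T := by
    intro v hv
    by_contra h
    exact hv.2 ((hX v).2 (Or.inl ⟨hv.1, h⟩))
  have dY₂ : Y \ B₂ ⊆ S := by
    intro v hv
    rcases (hY v).1 hv.1 with h | h
    · exact absurd h.1 hv.2
    · exact h.1
  have dY₂' : B₂ \ Y ⊆ S := by
    intro v hv
    by_contra h
    exact hv.2 ((hY v).2 (Or.inl ⟨hv.1, h⟩))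
  have dX₂ : (A \ X) \ A₂ ⊆ T := by
    intro v hv
    apply dX₁'
    have : v ∈ A₁ ∪ A₂ := by rw [hA]; exact hv.1.1
    exact ⟨this.resolve_right hv.2, hv.1.2⟩
  have dY₁ : (B \ Y) \ B₁ ⊆ S := by
    intro v hv
    apply dY₂'
    have : v ∈ B₁ ∪ B₂ := by rw [hB]; exact hv.1.1
    exact ⟨this.resolve_left hv.2, hv.1.2⟩
  have hXd : Disjoint X (A \ X) := Set.disjoint_sdiff_right
  have hYd : Disjoint (B \ Y) Y := Set.disjoint_sdiff_left
  have hXu : X ∪ (A \ X) = A := Set.union_diff_cancel hXA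
  have hYu : (B \ Y) ∪ Y = B := Set.diff_union_of_subset hYB
  have x1 : ∀ v ∈ X, (degOn G v Y : ℝ) ≤ ν₂ * n := by
    intro v hv
    rcases (hX v).1 hv with h | h
    · have a := t1 v h
      have b := degOn_le_diff G v Y B₂
      have c := mono _ _ dY₂
      linarith
    · exact h.2
  have y2 : ∀ v ∈ Y, (degOn G v X : ℝ) ≤ ν₂ * n := by
    intro v hv
    rcases (hY v).1 hv with h | h
    · have a := s1 v h
      have b := degOn_le_diff G v X A₁
      have c := mono _ _ dX₁
      linarith
    · exact h.2
  have x2 : ∀ v ∈ A \ X, ν₂ * n ≤ (degOn G v Y : ℝ) := by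
    intro v hv
    by_cases hvT : v ∈ T
    · by_contra hc
      exact hv.2 ((hX v).2 (Or.inr ⟨hvT, (not_le.mp hc).le⟩))
    · have hv2 : v ∈ A₂ := by
        by_contra h
        exact hvT (dX₂ ⟨hv, h⟩)
      have a := t2 v ⟨hv2, hvT⟩
      have b := degOn_le_diff G v B₂ Y
      have c := mono _ _ dY₂'
      linarith
  have y1 : ∀ v ∈ B \ Y, ν₂ * n ≤ (degOn G v X : ℝ) := by
    intro v hv
    by_cases hvS : v ∈ S
    · by_contra hc
      exact hv.2 ((hY v).2 (Or.inr ⟨hvS, (not_le.mp hc).le⟩))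
    · have hv2 : v ∈ B₁ := by
        by_contra h
        exact hvS (dY₁ ⟨hv, h⟩)
      have a := s2 v ⟨hv2, hvS⟩
      have b := degOn_le_diff G v A₁ X
      have c := mono _ _ dX₁'
      linarith
  have x1' : ∀ v ∈ X, (n : ℝ) / 2 - ν₂ * n ≤ (degOn G v (B \ Y) : ℝ) := by
    intro v hv
    have a := x1 v hv
    have b := degOn_split G v hYd (by rw [hYu]; exact hNA v (hXA hv))
    linarith [hdeg v]
  have y2' : ∀ v ∈ Y, (n : ℝ) / 2 - ν₂ * n ≤ (degOn G v (A \ X) : ℝ) := by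
    intro v hv
    have a := y2 v hv
    have b := degOn_split G v hXd (by rw [hXu]; exact hNB v (hYB hv))
    linarith [hdeg v]
  by_cases hcard : (B \ Y).ncard ≤ X.ncard
  · refine fin X (A \ X) (B \ Y) Y hXu hXd hYu hYd ?_ ?_ ?_ ?_ hAd hBd ?_ x2 y1 ?_
      (Or.inr x1) (Or.inr y2) hcard
    · linarith [mono _ _ dX₁]
    · linarith [mono _ _ dX₂]
    · linarith [mono _ _ dY₁]
    · linarith [mono _ _ dY₂]
    · intro v hv; linarith [x1' v hv]
    · intro v hv; linarith [y2' v hv]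
  push Not at hcard
  obtain ⟨P, Q, hP, hQ⟩ := exists_fix
    (fun Q v => v ∈ A \ X ∧ (degOn G v Q : ℝ) ≤ ν₂ * n)
    (fun P v => v ∈ B \ Y ∧ (degOn G v P : ℝ) ≤ ν₂ * n)
    (fun Y Y' v h h1 => ⟨h1.1, (degOn_mono' G v h).trans h1.2⟩)
    (fun Y Y' v h h1 => ⟨h1.1, (degOn_mono' G v h).trans h1.2⟩)
  obtain ⟨k, hk⟩ : ∃ k, (B \ Y).ncard = X.ncard + k := ⟨_, (Nat.add_sub_of_le hcard.le).symm⟩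
  have hkR : ((B \ Y).ncard : ℝ) = X.ncard + k := by exact_mod_cast hk
  have hkb : (k : ℝ) ≤ 3 / 16 * ν₁ * n := by
    have a : ((B \ Y).ncard : ℝ) ≤ ((B \ Y) \ B₁).ncard + B₁.ncard := by
      exact_mod_cast Set.ncard_le_ncard_sdiff_add_ncard _ _ (Set.toFinite _)
    have b : (A₁.ncard : ℝ) ≤ (A₁ \ X).ncard + X.ncard := by
      exact_mod_cast Set.ncard_le_ncard_sdiff_add_ncard _ _ (Set.toFinite _)
    linarith [mono _ _ dY₁, mono _ _ dX₁']
  set M : Set V := ((A \ X) \ P) ∪ ((B \ Y) \ Q) with hM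
  obtain ⟨M', hM'M, hM'k, hM'⟩ : ∃ M' ⊆ M, M'.ncard ≤ k ∧ (M'.ncard = k ∨ M' = M) := by
    by_cases h : k ≤ M.ncard
    · obtain ⟨M', h1, h2⟩ := Set.exists_subset_card_eq h
      exact ⟨M', h1, h2.le, Or.inl h2⟩
    · exact ⟨M, subset_rfl, (not_le.mp h).le, Or.inr rfl⟩
  have hM'kR : (M'.ncard : ℝ) ≤ k := by exact_mod_cast hM'k
  have notA : ∀ v ∈ A, v ∉ B := fun v hv => Set.disjoint_left.mp hAB hv
  have MA : ∀ v ∈ M', v ∈ A → v ∉ X ∧ v ∉ P := by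
    intro v hv hvA
    rcases hM'M hv with h | h
    · exact ⟨h.1.2, h.2⟩
    · exact absurd h.1.1 (notA v hvA)
  have MB : ∀ v ∈ M', v ∈ B → v ∉ Y ∧ v ∉ Q := by
    intro v hv hvB
    rcases hM'M hv with h | h
    · exact absurd hvB (notA v h.1.1)
    · exact ⟨h.1.2, h.2⟩
  have MAB : ∀ v ∈ M', v ∈ A ∨ v ∈ B := by
    intro v hv
    rcases hM'M hv with h | h
    · exact Or.inl h.1.1
    · exact Or.inr h.1.1
  have hC₁A : X ∪ (M' ∩ A) ⊆ A := Set.union_subset hXA Set.inter_subset_right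
  have hD₂B : Y ∪ (M' ∩ B) ⊆ B := Set.union_subset hYB Set.inter_subset_right
  have hPC : P ⊆ A \ (X ∪ (M' ∩ A)) := by
    intro v hv
    have h := ((hP v).1 hv).1
    refine ⟨h.1, ?_⟩
    rintro (h1 | h1)
    · exact h.2 h1
    · exact (MA v h1.1 h1.2).2 hv
  have hQD : Q ⊆ B \ (Y ∪ (M' ∩ B)) := by
    intro v hv
    have h := ((hQ v).1 hv).1
    refine ⟨h.1, ?_⟩
    rintro (h1 | h1)
    · exact h.2 h1
    · exact (MB v h1.1 h1.2).2 hv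
  have hC₂s : A \ (X ∪ (M' ∩ A)) ⊆ A \ X :=
    fun v hv => ⟨hv.1, fun h => hv.2 (Or.inl h)⟩
  have hD₁s : B \ (Y ∪ (M' ∩ B)) ⊆ B \ Y :=
    fun v hv => ⟨hv.1, fun h => hv.2 (Or.inl h)⟩
  have q2₁ : ∀ v ∈ X ∪ (M' ∩ A), ν₂ * n ≤ (degOn G v (B \ (Y ∪ (M' ∩ B))) : ℝ) := by
    rintro v (hv | hv)
    · have a := x1' v hv
      have b := degOn_le_diff G v (B \ Y) (B \ (Y ∪ (M' ∩ B)))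
      have c : (B \ Y) \ (B \ (Y ∪ (M' ∩ B))) ⊆ M' := by
        intro u hu
        by_contra h
        exact hu.2 ⟨hu.1.1, fun h' => h'.elim hu.1.2 (fun h'' => h h''.1)⟩
      linarith [mono _ _ c]
    · have h := MA v hv.1 hv.2
      by_contra hc
      apply h.2
      exact (hP v).2 ⟨⟨hv.2, h.1⟩, (degOn_mono' G v hQD).trans (not_le.mp hc).le⟩
  have q4₂ : ∀ v ∈ Y ∪ (M' ∩ B), ν₂ * n ≤ (degOn G v (A \ (X ∪ (M' ∩ A))) : ℝ) := by
    rintro v (hv | hv)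
    · have a := y2' v hv
      have b := degOn_le_diff G v (A \ X) (A \ (X ∪ (M' ∩ A)))
      have c : (A \ X) \ (A \ (X ∪ (M' ∩ A))) ⊆ M' := by
        intro u hu
        by_contra h
        exact hu.2 ⟨hu.1.1, fun h' => h'.elim hu.1.2 (fun h'' => h h''.1)⟩
      linarith [mono _ _ c]
    · have h := MB v hv.1 hv.2
      by_contra hc
      apply h.2
      exact (hQ v).2 ⟨⟨hv.2, h.1⟩, (degOn_mono' G v hPC).trans (not_le.mp hc).le⟩
  have q2₂ : ∀ v ∈ A \ (X ∪ (M' ∩ A)), ν₂ * n ≤ (degOn G v (Y ∪ (M' ∩ B)) : ℝ) :=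
    fun v hv => (x2 v (hC₂s hv)).trans (degOn_mono' G v Set.subset_union_left)
  have q4₁ : ∀ v ∈ B \ (Y ∪ (M' ∩ B)), ν₂ * n ≤ (degOn G v (X ∪ (M' ∩ A)) : ℝ) :=
    fun v hv => (y1 v (hD₁s hv)).trans (degOn_mono' G v Set.subset_union_left)
  have cC₁ : (X ∪ (M' ∩ A)).ncard = X.ncard + (M' ∩ A).ncard :=
    Set.ncard_union_eq (Set.disjoint_left.mpr fun v hv h => (MA v h.1 h.2).1 hv)
      (Set.toFinite _) (Set.toFinite _)
  have cD₂ : (Y ∪ (M' ∩ B)).ncard = Y.ncard + (M' ∩ B).ncard :=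
    Set.ncard_union_eq (Set.disjoint_left.mpr fun v hv h => (MB v h.1 h.2).1 hv)
      (Set.toFinite _) (Set.toFinite _)
  have cM : (M' ∩ A).ncard + (M' ∩ B).ncard = M'.ncard := by
    rw [← Set.ncard_union_eq (hAB.mono Set.inter_subset_right Set.inter_subset_right)
      (Set.toFinite _) (Set.toFinite _), ← Set.inter_union_distrib_left]
    congr 1
    exact Set.inter_eq_left.mpr MAB
  have cY : (B \ Y).ncard + Y.ncard = n := by
    rw [← hBn]; exact Set.ncard_sdiff_add_ncard_of_subset hYB (Set.toFinite _)
  have cD₁ : (B \ (Y ∪ (M' ∩ B))).ncard + (Y ∪ (M' ∩ B)).ncard = n := by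
    rw [← hBn]; exact Set.ncard_sdiff_add_ncard_of_subset hD₂B (Set.toFinite _)
  have cC₂ : (A \ (X ∪ (M' ∩ A))).ncard + (X ∪ (M' ∩ A)).ncard = n := by
    rw [← hAn]; exact Set.ncard_sdiff_add_ncard_of_subset hC₁A (Set.toFinite _)
  have hCu : (X ∪ (M' ∩ A)) ∪ (A \ (X ∪ (M' ∩ A))) = A := Set.union_diff_cancel hC₁A
  have hDu : (B \ (Y ∪ (M' ∩ B))) ∪ (Y ∪ (M' ∩ B)) = B := Set.diff_union_of_subset hD₂B
  have hCd : Disjoint (X ∪ (M' ∩ A)) (A \ (X ∪ (M' ∩ A))) := Set.disjoint_sdiff_right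
  have hDd : Disjoint (B \ (Y ∪ (M' ∩ B))) (Y ∪ (M' ∩ B)) := Set.disjoint_sdiff_left
  have un : ∀ P Q R : Set V, P ⊆ Q ∪ R → (P.ncard : ℝ) ≤ Q.ncard + R.ncard := by
    intro P Q R h
    exact_mod_cast (Set.ncard_le_ncard h (Set.toFinite _)).trans (Set.ncard_union_le _ _)
  have dC₁ : (((X ∪ (M' ∩ A)) \ A₁).ncard : ℝ) ≤ ν₁ / 4 * n := by
    have := un ((X ∪ (M' ∩ A)) \ A₁) T M' (by
      rintro v ⟨h1 | h1, h2⟩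
      · exact Or.inl (dX₁ ⟨h1, h2⟩)
      · exact Or.inr h1.1)
    linarith
  have dD₂ : (((Y ∪ (M' ∩ B)) \ B₂).ncard : ℝ) ≤ ν₁ / 4 * n := by
    have := un ((Y ∪ (M' ∩ B)) \ B₂) S M' (by
      rintro v ⟨h1 | h1, h2⟩
      · exact Or.inl (dY₂ ⟨h1, h2⟩)
      · exact Or.inr h1.1)
    linarith
  have dC₂ : (((A \ (X ∪ (M' ∩ A))) \ A₂).ncard : ℝ) ≤ ν₁ / 4 * n := by
    have := mono _ _ (show (A \ (X ∪ (M' ∩ A))) \ A₂ ⊆ T from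
      fun v hv => dX₂ ⟨hC₂s hv.1, hv.2⟩)
    linarith
  have dD₁ : (((B \ (Y ∪ (M' ∩ B))) \ B₁).ncard : ℝ) ≤ ν₁ / 4 * n := by
    have := mono _ _ (show (B \ (Y ∪ (M' ∩ B))) \ B₁ ⊆ S from
      fun v hv => dY₁ ⟨hD₁s hv.1, hv.2⟩)
    linarith
  rcases hM' with h | h
  · have heq : (X ∪ (M' ∩ A)).ncard = (B \ (Y ∪ (M' ∩ B))).ncard := by omega
    exact fin _ _ _ _ hCu hCd hDu hDd dC₁ dC₂ dD₁ dD₂ hAd hBd q2₁ q2₂ q4₁ q4₂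
      (Or.inl heq) (Or.inl heq) heq.ge
  · have hCP : A \ (X ∪ (M' ∩ A)) ⊆ P := by
      intro v hv
      by_contra hc
      have : v ∈ M' := by rw [h]; exact Or.inl ⟨hC₂s hv, hc⟩
      exact hv.2 (Or.inr ⟨this, hv.1⟩)
    have hDQ : B \ (Y ∪ (M' ∩ B)) ⊆ Q := by
      intro v hv
      by_contra hc
      have : v ∈ M' := by rw [h]; exact Or.inr ⟨hD₁s hv, hc⟩
      exact hv.2 (Or.inr ⟨this, hv.1⟩)
    refine fin' _ _ _ _ (by rw [Set.union_comm, hCu]) hCd.symm (by rw [Set.union_comm, hDu])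
      hDd.symm dC₂ dC₁ dD₂ dD₁ hAd.symm hBd.symm q2₂ q2₁ q4₂ q4₁ (Or.inr ?_) (Or.inr ?_) ?_
    · intro v hv
      exact (degOn_mono' G v hDQ).trans ((hP v).1 (hCP hv)).2
    · intro v hv
      exact (degOn_mono' G v hCP).trans ((hQ v).1 (hDQ hv)).2
    · omega

end helpers

/-- every ε-extremal Dirac bipartite graph on 2n vertices is
(ν₁,ν₂)-superextremal. -/
theorem extremal_implies_superextremal :
    ∃ ν₂₀ ∈ Set.Ioo (0 : ℝ) 1, ∀ ν₂ ∈ Set.Ioc (0 : ℝ) ν₂₀,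
    ∃ ν₁₀ ∈ Set.Ioc (0 : ℝ) ν₂, ∀ ν₁ ∈ Set.Ioc (0 : ℝ) ν₁₀,
    ∃ ε₀ : ℝ, 0 < ε₀ ∧ ∀ ε ∈ Set.Ioc (0 : ℝ) ε₀,
    ∃ n₀ : ℕ, ∀ n : ℕ, n₀ ≤ n →
      ∀ (V : Type) [Fintype V] (G : SimpleGraph V) (A B : Set V),
        A ∪ B = Set.univ → Disjoint A B → A.ncard = n → B.ncard = n →
        (∀ u v : V, G.Adj u v → (u ∈ A ∧ v ∈ B) ∨ (u ∈ B ∧ v ∈ A)) →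
        (∀ v : V, (n : ℝ) / 2 ≤ ((G.neighborSet v).ncard : ℝ)) →
        EpsExtremal G A B n ε →
        SuperExtremal G A B n ν₁ ν₂ := by
  refine ⟨1 / 10, ⟨by norm_num, by norm_num⟩, fun ν₂ hν₂ => ⟨ν₂, ⟨hν₂.1, le_rfl⟩, fun ν₁ hν₁ =>
    ⟨ν₁ ^ 2 / 320, by have := hν₁.1; positivity, fun ε hε => ⟨1, ?_⟩⟩⟩⟩
  intro n hn V _ G A B _ hAB hAn hBn hadj hdeg hext
  exact main_aux G A B n hn ε ν₁ ν₂ hν₂.1 hν₂.2 hν₁.1 hν₁.2 hε.1 hε.2 hAB hAn hBn hadj hdeg hext
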